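/- Let K be a field of characteristic zero, let P_n = K[H_1, …, H_n] be the polynomial algebra in n variables, and for i = 1, …, n let σ_i be the K-algebra automorphism of P_n determined by σ_i(H_j) = H_j − δ_{ij} (Kronecker delta). Let φ be a nonzero polynomial in P_n with leading term λ_d H^d = λ_d H_1^{d_1}⋯H_n^{d_n} with respect to the lexicographic monomial order with H_1 < ⋯ < H_n, where λ_d ∈ K is nonzero and d = (d_1, …, d_n) ∈ ℕ^n. Then the ideal of P_n generated by the polynomials σ^α(φ) := σ_1^{α_1}⋯σ_n^{α_n}(φ), where α = (α_1, …, α_n) ∈ ℕ^n ranges over all tuples with α_i ≤ d_i for all i, is the whole ring P_n; equivalently, the polynomials σ^α(φ) (α_i ≤ d_i) have no common zero in any extension of K. -/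

import Mathlib

/-!
Let `D_i = σ_i - 1`, which lowers the degree in `H_i` by one. Up to sign, the operator
`D_1^{d_1} ⋯ D_n^{d_n}` sends `H^d` to the nonzero constant `∏ d_i !`, and kills every monomial
`H^e` with `e_k < d_k` for some `k`. Every monomial of `φ` other than its leading one is of that
kind, so a nonzero constant is obtained from `φ`. Binomial expansion of the operator writes this
constant as a `K`-linear combination of the `σ^α(φ)` with `α ≤ d`, so the ideal they generate
contains a unit.

To avoid manipulating operators, the expanded combination is used directly: `σ^α` substitutes
`H_i - α_i` for `H_i` (`list_prod_shift`), so on a monomial the sum over `α` factors into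
one-variable alternating sums (`alternating_sum_pow`), which are iterated forward differences
of powers.
-/

open MvPolynomial

/-- The translation `H_j ↦ H_j - v_j`, as a homomorphism from the additive group of shift vectors
to the `K`-algebra endomorphisms of the polynomial ring. -/
noncomputable def shiftHom (K : Type*) [Field K] (n : ℕ) :
    Multiplicative (Fin n → K) →* (MvPolynomial (Fin n) K →ₐ[K] MvPolynomial (Fin n) K) where
  toFun v := aeval (fun j => X j - C (v.toAdd j))
  map_one' := by
    ext j : 1
    simp
  map_mul' v w := by
    ext j : 1
    simp [AlgHom.mul_apply]
    ring

lemma list_prod_shift {K : Type*} [Field K] (n : ℕ)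
    (σ : Fin n → (MvPolynomial (Fin n) K →ₐ[K] MvPolynomial (Fin n) K))
    (hσ : ∀ i, σ i = aeval (fun j : Fin n => X j - if i = j then 1 else 0)) (α : Fin n → ℕ) :
    (List.ofFn (fun i : Fin n => (σ i) ^ (α i))).prod =
      aeval (fun j : Fin n => X j - (α j : MvPolynomial (Fin n) K)) := by
  have h1 : ∀ i, σ i = shiftHom K n (Multiplicative.ofAdd (Pi.single i 1)) := by
    intro i
    rw [hσ]
    ext j : 1
    by_cases h : i = j
    · subst h
      simp [shiftHom]
    · simp [shiftHom, h, Pi.single_apply, Ne.symm h]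
  have h2 : (fun i : Fin n => (σ i) ^ (α i)) = shiftHom K n ∘
      fun i => (Multiplicative.ofAdd (Pi.single i (1 : K))) ^ (α i) := by
    funext i
    simp [h1]
  rw [h2, ← List.map_ofFn, ← map_list_prod, List.prod_ofFn]
  ext j : 1
  have h3 : (∏ i, (Multiplicative.ofAdd (Pi.single i (1 : K) : Fin n → K)) ^ (α i)).toAdd j
      = (α j : K) := by
    simp [toAdd_prod, Finset.sum_apply, Pi.single_apply]
  simp only [shiftHom, MonoidHom.coe_mk, OneHom.coe_mk, aeval_X, h3, map_natCast]

/-- For `j ≤ d`, the operator `(σ - 1) ^ d`, with `σ` the shift `y ↦ y - 1`, applied to `y ^ j`.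
The sum is the `d`-th forward difference of `x ↦ x ^ j`, evaluated at `-y`, times `(-1) ^ j`. -/
lemma alternating_sum_pow {R : Type*} [CommRing R] (d j : ℕ) (hj : j ≤ d) (y : R) :
    ∑ a ∈ Finset.range (d + 1), ((((-1) ^ (d - a) * d.choose a : ℤ)) : R) * (y - (a : R)) ^ j =
      if j = d then (-1) ^ d * (d.factorial : R) else 0 := by
  have h := fwdDiff_iter_eq_sum_shift (1 : R) (fun x : R => x ^ j) d (-y)
  have h' : ∑ a ∈ Finset.range (d + 1),
      ((((-1) ^ (d - a) * d.choose a : ℤ)) : R) * (y - (a : R)) ^ j =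
      (-1) ^ j * (fwdDiff (1 : R))^[d] (fun x : R => x ^ j) (-y) := by
    rw [h, Finset.mul_sum]
    refine Finset.sum_congr rfl fun a _ => ?_
    have : y - (a : R) = (-1) * (-y + a • (1 : R)) := by
      rw [nsmul_one]
      ring
    rw [this, mul_pow, zsmul_eq_mul]
    ring
  rw [h']
  split_ifs with hjd
  · subst hjd
    rw [fwdDiff_iter_eq_factorial]
    simp
  · rw [fwdDiff_iter_pow_eq_zero_of_lt (lt_of_le_of_ne hj hjd)]
    simp

/-- Let `K` be a field of characteristic zero, `P_n = K[H_1,…,H_n]`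
(`MvPolynomial (Fin n) K`), and for each `i` let `σ_i` be the `K`-algebra endomorphism
(automorphism) with `σ_i(H_j) = H_j − δ_{ij}`.  Let `φ` have leading term `λ_d H^d`
with respect to the lexicographic order with `H_1 < ⋯ < H_n` (`H_n` most significant).
Then the ideal of `P_n` generated by the polynomials
`σ^α(φ) = σ_1^{α_1}(⋯(σ_n^{α_n}(φ)))`, for `α ∈ ℕⁿ` with `α_i ≤ d_i` for all `i`,
is the whole ring `P_n` (equivalently, these polynomials have no common zero in any
field extension of `K`).  Here powers and products of the `σ_i` are taken in the
monoid of `K`-algebra endomorphisms of `P_n` under composition. -/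
theorem stmt18 {K : Type*} [Field K] [CharZero K] (n : ℕ)
    (σ : Fin n → (MvPolynomial (Fin n) K →ₐ[K] MvPolynomial (Fin n) K))
    (hσ : ∀ i, σ i = aeval (fun j : Fin n => X j - if i = j then 1 else 0))
    (φ : MvPolynomial (Fin n) K) (d : Fin n →₀ ℕ) (lam : K) (hlam : lam ≠ 0)
    (hcoeff : coeff d φ = lam)
    (hlead : ∀ e ∈ φ.support, e ≠ d →
      ∃ k : Fin n, e k < d k ∧ ∀ j : Fin n, k < j → e j = d j) :
    Ideal.span {p : MvPolynomial (Fin n) K | ∃ α : Fin n → ℕ, (∀ i, α i ≤ d i) ∧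
      p = (List.ofFn (fun i : Fin n => (σ i) ^ (α i))).prod φ} = ⊤ := by
  set I := Ideal.span {p : MvPolynomial (Fin n) K | ∃ α : Fin n → ℕ, (∀ i, α i ≤ d i) ∧
      p = (List.ofFn (fun i : Fin n => (σ i) ^ (α i))).prod φ} with hI
  let A : Finset (Fin n → ℕ) := Fintype.piFinset fun i => Finset.range (d i + 1)
  -- `w i` lists the coefficients of `(σ_i - 1) ^ d_i`, so `S` is the operator `∏ i, (σ_i - 1) ^ d_i`.
  let w : (i : Fin n) → ℕ → MvPolynomial (Fin n) K :=
    fun i a => (((-1) ^ (d i - a) * (d i).choose a : ℤ) : MvPolynomial (Fin n) K)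
  let S : MvPolynomial (Fin n) K → MvPolynomial (Fin n) K := fun p =>
    ∑ α ∈ A, (∏ i, w i (α i)) *
      aeval (fun j : Fin n => X j - (α j : MvPolynomial (Fin n) K)) p
  have hmem : S φ ∈ I := by
    refine Ideal.sum_mem _ fun α hα => Ideal.mul_mem_left _ _ (Ideal.subset_span ⟨α, ?_, ?_⟩)
    · intro i
      have := Fintype.mem_piFinset.mp hα i
      simpa [Nat.lt_succ_iff] using this
    · rw [list_prod_shift n σ hσ]
  have hmono : ∀ (e : Fin n →₀ ℕ) (c : K), S (monomial e c) =
      C c * ∏ i, ∑ a ∈ Finset.range (d i + 1), w i a * (X i - (a : MvPolynomial (Fin n) K)) ^ e i := by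
    intro e c
    rw [Finset.prod_univ_sum, Finset.mul_sum]
    refine Finset.sum_congr rfl fun α _ => ?_
    rw [aeval_monomial, Finsupp.prod_fintype _ _ (fun i => pow_zero _), Finset.prod_mul_distrib,
      algebraMap_eq]
    ring
  have hzero : ∀ e ∈ φ.support, e ≠ d → S (monomial e (coeff e φ)) = 0 := by
    intro e he hed
    obtain ⟨k, hk, -⟩ := hlead e he hed
    rw [hmono, Finset.prod_eq_zero (Finset.mem_univ k), mul_zero]
    rw [alternating_sum_pow _ _ hk.le, if_neg hk.ne]
  have hsum : S φ = ∑ e ∈ φ.support, S (monomial e (coeff e φ)) := by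
    conv_lhs => rw [φ.as_sum]
    simp only [S, map_sum, Finset.mul_sum]
    exact Finset.sum_comm
  have hd : d ∈ φ.support := by
    rw [mem_support_iff, hcoeff]
    exact hlam
  have hval : S φ = C (lam * ∏ i, ((-1) ^ d i * ((d i).factorial : K))) := by
    rw [hsum, Finset.sum_eq_single_of_mem d hd hzero, hmono, hcoeff, map_mul, map_prod]
    congr 1
    refine Finset.prod_congr rfl fun i _ => ?_
    rw [alternating_sum_pow _ _ le_rfl, if_pos rfl]
    simp
  refine Ideal.eq_top_of_isUnit_mem I hmem ?_
  rw [hval]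
  refine IsUnit.map C (IsUnit.mk0 _ (mul_ne_zero hlam ?_))
  exact Finset.prod_ne_zero_iff.mpr fun i _ =>
    mul_ne_zero (pow_ne_zero _ (by simp)) (Nat.cast_ne_zero.mpr (Nat.factorial_ne_zero _))
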